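/- Let n ≥ 1, ε ∈ (0,1), κ ≥ 0, a ∈ (0,1). Let b : [0,∞) → (0,∞) be C¹ and monotone with |b'(t)| ≤ a·b(t)² for all t, and let g : [0,∞) → [0,∞) be continuous. Then there is a constant C > 0, depending only on ε, κ and a (independent of ξ and of the interval), with the following property: for every ξ ∈ ℝⁿ and every interval [t₀,t₁] such that |ξ| ≤ (b(τ)/2)·√(1−ε²) and g(τ)|ξ|² ≤ κ·b(τ) for all τ ∈ [t₀,t₁], every twice continuously differentiable v : [t₀,t₁] → ℂ solving v''(t) + |ξ|²v(t) + (b(t)+g(t)|ξ|²)v'(t) = 0 satisfies, with E(t) = ½( |v'(t)|² + |ξ|²|v(t)|² ), E(t) ≤ C·exp( −(1/C)·|ξ|²·∫_{t₀}ᵗ 1/b(τ) dτ )·E(t₀) for all t ∈ [t₀,t₁]. -/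

import Mathlib

open MeasureTheory Filter

/-!
With `ω = ‖ξ‖` and `β = b + g ‖ξ‖ ^ 2` the equation reads `v'' + ω ^ 2 v + β v' = 0`. Multiplying it
by `v'` shows that the energy `E` dissipates at the rate `β ‖v'‖ ^ 2`, which gives no decay of
`‖v‖`. The missing term is produced by the multiplier `K v` with `K = ω ^ 2 / b`: differentiating
`K ⟪v', v⟫` yields `-K ω ^ 2 ‖v‖ ^ 2`, up to the term `K ‖v'‖ ^ 2` and a cross term, and both are
absorbed once `K ⟪v', v⟫` carries a small weight `δ`. Hence `L = E + δ K ⟪v', v⟫` satisfies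
`L' ≤ -δ K E`. In the elliptic zone `2 |ω| ≤ b` the correction is at most `E / 2`, so `L` is
comparable to `E` and Gronwall's inequality applies to `L`.
-/

section Gronwall

variable {t₀ t₁ t : ℝ}

lemma hasDerivWithinAt_integral_Icc {E : Type*} [NormedAddCommGroup E] [NormedSpace ℝ E]
    [CompleteSpace E] {k : ℝ → E} (hk : ContinuousOn k (Set.Icc t₀ t₁))
    (ht : t ∈ Set.Icc t₀ t₁) :
    HasDerivWithinAt (fun τ ↦ ∫ σ in t₀..τ, k σ) (k t) (Set.Icc t₀ t₁) t := by
  have : Fact (t ∈ Set.Icc t₀ t₁) := ⟨ht⟩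
  have hk_int : IntervalIntegrable k volume t₀ t :=
    (hk.mono (Set.Icc_subset_Icc_right ht.2)).intervalIntegrable_of_Icc ht.1
  exact intervalIntegral.integral_hasDerivWithinAt_right hk_int
    (hk.stronglyMeasurableAtFilter_nhdsWithin measurableSet_Icc t) (hk t ht)

lemma le_mul_exp_integral_of_hasDerivWithinAt_le {f f' k : ℝ → ℝ}
    (hf : ∀ τ ∈ Set.Icc t₀ t₁, HasDerivWithinAt f (f' τ) (Set.Icc t₀ t₁) τ)
    (hk : ContinuousOn k (Set.Icc t₀ t₁))
    (hf' : ∀ τ ∈ Set.Icc t₀ t₁, f' τ ≤ k τ * f τ) (ht : t ∈ Set.Icc t₀ t₁) :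
    f t ≤ f t₀ * Real.exp (∫ τ in t₀..t, k τ) := by
  set F : ℝ → ℝ := fun τ ↦ f τ * Real.exp (-∫ σ in t₀..τ, k σ) with hF
  have hF_deriv (τ) (hτ : τ ∈ Set.Icc t₀ t₁) := (hf τ hτ).fun_mul
    (hasDerivWithinAt_integral_Icc hk hτ).fun_neg.exp
  have hF_anti : AntitoneOn F (Set.Icc t₀ t₁) := by
    refine antitoneOn_of_hasDerivWithinAt_nonpos (convex_Icc t₀ t₁)
      (fun τ hτ ↦ (hF_deriv τ hτ).continuousWithinAt)
      (fun τ hτ ↦ (hF_deriv τ (interior_subset hτ)).mono interior_subset) fun τ hτ ↦ ?_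
    have hτ' := hf' τ (interior_subset hτ)
    linear_combination Real.exp (-∫ σ in t₀..τ, k σ) * hτ'
  have hFt : F t ≤ f t₀ := by
    simpa [hF] using hF_anti (Set.left_mem_Icc.2 (ht.1.trans ht.2)) ht ht.1
  calc f t = F t * Real.exp (∫ τ in t₀..t, k τ) := by
        rw [hF, mul_assoc, ← Real.exp_add, neg_add_cancel, Real.exp_zero, mul_one]
    _ ≤ f t₀ * Real.exp (∫ τ in t₀..t, k τ) := by gcongr

end Gronwall

section Energy

variable {H : Type*} [NormedAddCommGroup H]

/-- The energy of an oscillator of frequency `ω` at position `x` and velocity `y`. -/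
noncomputable def oscillatorEnergy (ω : ℝ) (x y : H) : ℝ :=
  1 / 2 * (‖y‖ ^ 2 + ω ^ 2 * ‖x‖ ^ 2)

lemma oscillatorEnergy_nonneg (ω : ℝ) (x y : H) : 0 ≤ oscillatorEnergy ω x y := by
  unfold oscillatorEnergy
  positivity

variable [InnerProductSpace ℝ H]

/-- The Lyapunov functional of the damped oscillator: its energy, corrected by `δ` times the term
that the energy multiplier `ω ^ 2 / b` contributes. -/
noncomputable def correctedEnergy (δ ω b : ℝ) (x y : H) : ℝ :=
  oscillatorEnergy ω x y + δ * (ω ^ 2 / b * inner ℝ y x)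

section Pointwise

variable {δ ω b : ℝ}

lemma sq_div_le_div_four (hb : 0 < b) (hω : |ω| ≤ b / 2) : ω ^ 2 / b ≤ b / 4 := by
  rw [div_le_iff₀ hb]
  calc ω ^ 2 ≤ (b / 2) ^ 2 := sq_le_sq' (abs_le.1 hω).1 (abs_le.1 hω).2
    _ = b / 4 * b := by ring

lemma abs_correction_le_half_oscillatorEnergy (hδ₀ : 0 ≤ δ) (hδ₁ : δ ≤ 1) (hb : 0 < b)
    (hω : |ω| ≤ b / 2) (x y : H) :
    |δ * (ω ^ 2 / b * inner ℝ y x)| ≤ 1 / 2 * oscillatorEnergy ω x y := by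
  have hK : ω ^ 2 / b ≤ |ω| / 2 := by
    rw [div_le_iff₀ hb, ← sq_abs]
    nlinarith [abs_nonneg ω]
  rw [abs_mul, abs_mul, abs_of_nonneg hδ₀, abs_of_nonneg (div_nonneg (sq_nonneg ω) hb.le)]
  calc δ * (ω ^ 2 / b * |inner ℝ y x|) ≤ 1 * (|ω| / 2 * (‖y‖ * ‖x‖)) := by
        gcongr
        exact abs_real_inner_le_norm y x
    _ ≤ 1 / 2 * oscillatorEnergy ω x y := by
        rw [oscillatorEnergy, ← sq_abs ω]
        linarith [two_mul_le_add_sq ‖y‖ (|ω| * ‖x‖)]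

lemma correctedEnergy_le (hδ₀ : 0 ≤ δ) (hδ₁ : δ ≤ 1) (hb : 0 < b) (hω : |ω| ≤ b / 2) (x y : H) :
    correctedEnergy δ ω b x y ≤ 3 / 2 * oscillatorEnergy ω x y := by
  have := (abs_le.1 (abs_correction_le_half_oscillatorEnergy hδ₀ hδ₁ hb hω x y)).2
  rw [correctedEnergy]
  linarith

lemma oscillatorEnergy_le_two_mul_correctedEnergy (hδ₀ : 0 ≤ δ) (hδ₁ : δ ≤ 1) (hb : 0 < b)
    (hω : |ω| ≤ b / 2) (x y : H) :
    oscillatorEnergy ω x y ≤ 2 * correctedEnergy δ ω b x y := by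
  have := (abs_le.1 (abs_correction_le_half_oscillatorEnergy hδ₀ hδ₁ hb hω x y)).1
  rw [correctedEnergy]
  linarith

lemma neg_cross_term_le {c M : ℝ} (hb : 0 < b) (hc : |c| ≤ M * b) (x y : H) :
    -(ω ^ 2 / b * (c * inner ℝ y x)) ≤
      1 / 2 * (M ^ 2 * b * ‖y‖ ^ 2 + ω ^ 2 / b * (ω ^ 2 * ‖x‖ ^ 2)) := by
  have hinner : -(c * inner ℝ y x) ≤ M * b * (‖y‖ * ‖x‖) :=
    calc -(c * inner ℝ y x) ≤ |c| * |inner ℝ y x| := abs_mul c _ ▸ neg_le_abs _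
      _ ≤ M * b * (‖y‖ * ‖x‖) :=
        mul_le_mul hc (abs_real_inner_le_norm y x) (abs_nonneg _) ((abs_nonneg c).trans hc)
  calc -(ω ^ 2 / b * (c * inner ℝ y x)) = ω ^ 2 / b * -(c * inner ℝ y x) := by ring
    _ ≤ ω ^ 2 / b * (M * b * (‖y‖ * ‖x‖)) := by gcongr
    _ = b / 2 * (2 * (M * ‖y‖) * (ω ^ 2 / b * ‖x‖)) := by ring
    _ ≤ b / 2 * ((M * ‖y‖) ^ 2 + (ω ^ 2 / b * ‖x‖) ^ 2) := by
        gcongr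
        exact two_mul_le_add_sq _ _
    _ = 1 / 2 * (M ^ 2 * b * ‖y‖ ^ 2 + ω ^ 2 / b * (ω ^ 2 * ‖x‖ ^ 2)) := by
        field_simp

lemma corrected_dissipation_le {β c M : ℝ} (hδ₀ : 0 ≤ δ) (hδM : δ * (1 + M ^ 2) ≤ 1) (hb : 0 < b)
    (hω : |ω| ≤ b / 2) (hβ : b ≤ β) (hc : |c| ≤ M * b) (x y : H) :
    -β * ‖y‖ ^ 2 + δ * (ω ^ 2 / b * (‖y‖ ^ 2 - ω ^ 2 * ‖x‖ ^ 2 - c * inner ℝ y x)) ≤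
      -(δ * (ω ^ 2 / b)) * oscillatorEnergy ω x y := by
  have hβy : b * ‖y‖ ^ 2 ≤ β * ‖y‖ ^ 2 := by gcongr
  have hcross := mul_le_mul_of_nonneg_left (neg_cross_term_le (ω := ω) hb hc x y) hδ₀
  have hKy : δ * (ω ^ 2 / b * ‖y‖ ^ 2) ≤ δ * (b / 4 * ‖y‖ ^ 2) := by
    gcongr δ * (?_ * _)
    exact sq_div_le_div_four hb hω
  have habsorb : δ * (1 + M ^ 2) * (b * ‖y‖ ^ 2) ≤ 1 * (b * ‖y‖ ^ 2) := by gcongr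
  have hpos : 0 ≤ δ * (b * ‖y‖ ^ 2) := by positivity
  have hpos' : 0 ≤ b * ‖y‖ ^ 2 := by positivity
  rw [oscillatorEnergy]
  linarith

end Pointwise

section Derivative

variable {ω β t : ℝ} {s : Set ℝ} {v w : ℝ → H}

lemma hasDerivWithinAt_oscillatorEnergy (hv : HasDerivWithinAt v (w t) s t)
    (hw : HasDerivWithinAt w (-(ω ^ 2 • v t) - β • w t) s t) :
    HasDerivWithinAt (fun τ ↦ oscillatorEnergy ω (v τ) (w τ)) (-β * ‖w t‖ ^ 2) s t := by
  refine ((hw.norm_sq.fun_add (hv.norm_sq.const_mul (ω ^ 2))).const_mul (1 / 2)).congr_deriv ?_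
  simp only [inner_sub_right, inner_neg_right, real_inner_smul_right, real_inner_self_eq_norm_sq,
    real_inner_comm (v t) (w t)]
  ring

lemma hasDerivWithinAt_inner_velocity_position (hv : HasDerivWithinAt v (w t) s t)
    (hw : HasDerivWithinAt w (-(ω ^ 2 • v t) - β • w t) s t) :
    HasDerivWithinAt (fun τ ↦ inner ℝ (w τ) (v τ))
      (‖w t‖ ^ 2 - ω ^ 2 * ‖v t‖ ^ 2 - β * inner ℝ (w t) (v t)) s t := by
  refine (hw.inner ℝ hv).congr_deriv ?_
  simp only [inner_sub_left, inner_neg_left, real_inner_smul_left, real_inner_self_eq_norm_sq]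
  ring

lemma hasDerivWithinAt_correctedEnergy {b : ℝ → ℝ} {b' : ℝ} (δ : ℝ)
    (hb : HasDerivWithinAt b b' s t) (hbt : b t ≠ 0) (hv : HasDerivWithinAt v (w t) s t)
    (hw : HasDerivWithinAt w (-(ω ^ 2 • v t) - β • w t) s t) :
    HasDerivWithinAt (fun τ ↦ correctedEnergy δ ω (b τ) (v τ) (w τ))
      (-β * ‖w t‖ ^ 2 + δ * (ω ^ 2 / b t *
        (‖w t‖ ^ 2 - ω ^ 2 * ‖v t‖ ^ 2 - (β + b' / b t) * inner ℝ (w t) (v t)))) s t := by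
  have hK : HasDerivWithinAt (fun τ ↦ ω ^ 2 / b τ) (-(ω ^ 2 / b t * (b' / b t))) s t :=
    ((hasDerivWithinAt_const t s (ω ^ 2)).fun_div hb hbt).congr_deriv (by field_simp; ring)
  refine ((hasDerivWithinAt_oscillatorEnergy hv hw).fun_add
    ((hK.fun_mul (hasDerivWithinAt_inner_velocity_position hv hw)).const_mul δ)).congr_deriv ?_
  ring

end Derivative

lemma abs_damping_add_logDeriv_le {a b b' β Γ : ℝ} (hb : 0 < b) (hb' : |b'| ≤ a * b ^ 2)
    (hβ : b ≤ β) (hβ' : β ≤ Γ * b) : |β + b' / b| ≤ (Γ + a) * b :=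
  calc |β + b' / b| ≤ |β| + |b' / b| := abs_add_le _ _
    _ ≤ Γ * b + a * b := by
        gcongr
        · rwa [abs_of_nonneg (hb.le.trans hβ)]
        · rw [abs_div, abs_of_pos hb, div_le_iff₀ hb]
          linarith
    _ = (Γ + a) * b := by ring

section Decay

variable {a Γ δ ω t₀ t₁ : ℝ} {b b' β : ℝ → ℝ} {v w : ℝ → H}

lemma correctedEnergy_le_mul_exp (hδ₀ : 0 ≤ δ) (hδ : δ * (1 + (Γ + a) ^ 2) ≤ 1)
    (hb : ∀ τ ∈ Set.Icc t₀ t₁, HasDerivWithinAt b (b' τ) (Set.Icc t₀ t₁) τ)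
    (hb_pos : ∀ τ ∈ Set.Icc t₀ t₁, 0 < b τ)
    (hb' : ∀ τ ∈ Set.Icc t₀ t₁, |b' τ| ≤ a * b τ ^ 2)
    (hω : ∀ τ ∈ Set.Icc t₀ t₁, |ω| ≤ b τ / 2)
    (hβ : ∀ τ ∈ Set.Icc t₀ t₁, b τ ≤ β τ) (hβ' : ∀ τ ∈ Set.Icc t₀ t₁, β τ ≤ Γ * b τ)
    (hv : ∀ τ ∈ Set.Icc t₀ t₁, HasDerivWithinAt v (w τ) (Set.Icc t₀ t₁) τ)
    (hw : ∀ τ ∈ Set.Icc t₀ t₁,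
      HasDerivWithinAt w (-(ω ^ 2 • v τ) - β τ • w τ) (Set.Icc t₀ t₁) τ)
    {t : ℝ} (ht : t ∈ Set.Icc t₀ t₁) :
    correctedEnergy δ ω (b t) (v t) (w t) ≤ correctedEnergy δ ω (b t₀) (v t₀) (w t₀) *
      Real.exp (-(2 / 3 * δ) * ω ^ 2 * ∫ τ in t₀..t, (b τ)⁻¹) := by
  have hb_cont : ContinuousOn b (Set.Icc t₀ t₁) := fun τ hτ ↦ (hb τ hτ).continuousWithinAt
  rw [← intervalIntegral.integral_const_mul]
  refine le_mul_exp_integral_of_hasDerivWithinAt_le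
    (fun τ hτ ↦ hasDerivWithinAt_correctedEnergy δ (hb τ hτ) (hb_pos τ hτ).ne' (hv τ hτ) (hw τ hτ))
    (continuousOn_const.mul (hb_cont.inv₀ fun τ hτ ↦ (hb_pos τ hτ).ne')) (fun τ hτ ↦ ?_) ht
  have hbτ := hb_pos τ hτ
  have hδ₁ : δ ≤ 1 := by nlinarith [mul_nonneg hδ₀ (sq_nonneg (Γ + a))]
  refine (corrected_dissipation_le hδ₀ hδ hbτ (hω τ hτ) (hβ τ hτ)
    (abs_damping_add_logDeriv_le hbτ (hb' τ hτ) (hβ τ hτ) (hβ' τ hτ)) (v τ) (w τ)).trans ?_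
  linear_combination (2 / 3 * (δ * (ω ^ 2 / b τ))) *
    correctedEnergy_le hδ₀ hδ₁ hbτ (hω τ hτ) (v τ) (w τ)

theorem elliptic_dissipative_zone_energy_decay_general {C : ℝ}
    (hC : 3 + 3 / 2 * (Γ + a) ^ 2 ≤ C)
    (hb : ∀ τ ∈ Set.Icc t₀ t₁, HasDerivWithinAt b (b' τ) (Set.Icc t₀ t₁) τ)
    (hb_pos : ∀ τ ∈ Set.Icc t₀ t₁, 0 < b τ)
    (hb' : ∀ τ ∈ Set.Icc t₀ t₁, |b' τ| ≤ a * b τ ^ 2)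
    (hω : ∀ τ ∈ Set.Icc t₀ t₁, |ω| ≤ b τ / 2)
    (hβ : ∀ τ ∈ Set.Icc t₀ t₁, b τ ≤ β τ) (hβ' : ∀ τ ∈ Set.Icc t₀ t₁, β τ ≤ Γ * b τ)
    (hv : ∀ τ ∈ Set.Icc t₀ t₁, HasDerivWithinAt v (w τ) (Set.Icc t₀ t₁) τ)
    (hw : ∀ τ ∈ Set.Icc t₀ t₁,
      HasDerivWithinAt w (-(ω ^ 2 • v τ) - β τ • w τ) (Set.Icc t₀ t₁) τ)
    {t : ℝ} (ht : t ∈ Set.Icc t₀ t₁) :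
    oscillatorEnergy ω (v t) (w t) ≤
      C * Real.exp (-(1 / C) * ω ^ 2 * ∫ τ in t₀..t, (b τ)⁻¹) *
        oscillatorEnergy ω (v t₀) (w t₀) := by
  have hC₃ : 3 ≤ C := by linarith [sq_nonneg (Γ + a)]
  set δ : ℝ := 3 / 2 * (1 / C) with hδ
  have hδ₀ : 0 ≤ δ := by rw [hδ]; positivity
  have hδC : δ * C = 3 / 2 := by rw [hδ]; field_simp
  have hδM : δ * (1 + (Γ + a) ^ 2) ≤ 1 := by nlinarith
  have hδ₁ : δ ≤ 1 := by nlinarith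
  have ht₀ : t₀ ∈ Set.Icc t₀ t₁ := Set.left_mem_Icc.2 (ht.1.trans ht.2)
  have hrate : 2 / 3 * δ = 1 / C := by rw [hδ]; ring
  have hdecay := correctedEnergy_le_mul_exp hδ₀ hδM hb hb_pos hb' hω hβ hβ' hv hw ht
  rw [hrate] at hdecay
  set decay := Real.exp (-(1 / C) * ω ^ 2 * ∫ τ in t₀..t, (b τ)⁻¹)
  have hE₀ : 0 ≤ oscillatorEnergy ω (v t₀) (w t₀) := oscillatorEnergy_nonneg _ _ _
  calc oscillatorEnergy ω (v t) (w t) ≤ 2 * correctedEnergy δ ω (b t) (v t) (w t) :=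
        oscillatorEnergy_le_two_mul_correctedEnergy hδ₀ hδ₁ (hb_pos t ht) (hω t ht) _ _
    _ ≤ 2 * (correctedEnergy δ ω (b t₀) (v t₀) (w t₀) * decay) := by gcongr
    _ ≤ 2 * (3 / 2 * oscillatorEnergy ω (v t₀) (w t₀) * decay) := by
        gcongr
        exact correctedEnergy_le hδ₀ hδ₁ (hb_pos t₀ ht₀) (hω t₀ ht₀) _ _
    _ = 3 * decay * oscillatorEnergy ω (v t₀) (w t₀) := by ring
    _ ≤ C * decay * oscillatorEnergy ω (v t₀) (w t₀) := by gcongr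

end Decay

end Energy

lemma le_half_of_le_half_mul_sqrt {ω b ε : ℝ} (hb : 0 ≤ b)
    (h : ω ≤ b / 2 * Real.sqrt (1 - ε ^ 2)) : ω ≤ b / 2 :=
  h.trans <| mul_le_of_le_one_right (by positivity) <|
    Real.sqrt_le_one.2 <| sub_le_self 1 (sq_nonneg ε)

lemma hasDerivAt_deriv_of_damped_equation {ω β t : ℝ} {v : ℝ → ℂ} (hv : ContDiff ℝ 2 v)
    (hode : deriv (deriv v) t + ((ω ^ 2 : ℝ) : ℂ) * v t + (β : ℂ) * deriv v t = 0) :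
    HasDerivAt (deriv v) (-(ω ^ 2 • v t) - β • deriv v t) t := by
  refine (hv.differentiable_deriv_two t).hasDerivAt.congr_deriv ?_
  rw [Complex.real_smul, Complex.real_smul]
  linear_combination hode

/-- Proposition `Prop:Effective-integrable-EM8-Zdiss` of the paper: exponential decay of
the pointwise energy in the elliptic part of the dissipative zone. -/
theorem elliptic_dissipative_zone_energy_decay
    (ε κ a : ℝ) (hε : ε ∈ Set.Ioo (0 : ℝ) 1) (hκ : 0 ≤ κ) (ha : a ∈ Set.Ioo (0 : ℝ) 1) :
    ∃ C : ℝ, 0 < C ∧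
      ∀ (n : ℕ), 1 ≤ n →
        ∀ b g : ℝ → ℝ, ContDiff ℝ 1 b →
          (MonotoneOn b (Set.Ici (0 : ℝ)) ∨ AntitoneOn b (Set.Ici (0 : ℝ))) →
          (∀ t : ℝ, 0 ≤ t → 0 < b t) →
          (∀ t : ℝ, 0 ≤ t → |deriv b t| ≤ a * (b t) ^ 2) →
          Continuous g → (∀ t : ℝ, 0 ≤ t → 0 ≤ g t) →
          ∀ (ξ : EuclideanSpace ℝ (Fin n)) (t₀ t₁ : ℝ), 0 ≤ t₀ → t₀ ≤ t₁ →
            (∀ τ ∈ Set.Icc t₀ t₁, ‖ξ‖ ≤ (b τ / 2) * Real.sqrt (1 - ε ^ 2)) →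
            (∀ τ ∈ Set.Icc t₀ t₁, g τ * ‖ξ‖ ^ 2 ≤ κ * b τ) →
            ∀ v : ℝ → ℂ, ContDiff ℝ 2 v →
              (∀ τ ∈ Set.Icc t₀ t₁,
                deriv (deriv v) τ + ((‖ξ‖ ^ 2 : ℝ) : ℂ) * v τ +
                  ((b τ + g τ * ‖ξ‖ ^ 2 : ℝ) : ℂ) * deriv v τ = 0) →
              ∀ t ∈ Set.Icc t₀ t₁,
                (1 / 2) * (‖deriv v t‖ ^ 2 + ‖ξ‖ ^ 2 * ‖v t‖ ^ 2) ≤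
                  C * Real.exp (-(1 / C) * ‖ξ‖ ^ 2 * ∫ τ in t₀..t, (b τ)⁻¹) *
                    ((1 / 2) * (‖deriv v t₀‖ ^ 2 + ‖ξ‖ ^ 2 * ‖v t₀‖ ^ 2)) := by
  refine ⟨3 + 3 / 2 * (1 + κ + a) ^ 2, by positivity, ?_⟩
  intro n _ b g hb _ hb_pos hb' _ hg ξ t₀ t₁ ht₀ _ hξ hgξ v hv hode t ht
  have hnonneg (τ) (hτ : τ ∈ Set.Icc t₀ t₁) : 0 ≤ τ := ht₀.trans hτ.1
  exact elliptic_dissipative_zone_energy_decay_general (β := fun τ ↦ b τ + g τ * ‖ξ‖ ^ 2) le_rfl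
    (fun τ _ ↦ (hb.differentiable one_ne_zero τ).hasDerivAt.hasDerivWithinAt)
    (fun τ hτ ↦ hb_pos τ (hnonneg τ hτ)) (fun τ hτ ↦ hb' τ (hnonneg τ hτ))
    (fun τ hτ ↦ (abs_norm ξ).trans_le <|
      le_half_of_le_half_mul_sqrt (hb_pos τ (hnonneg τ hτ)).le (hξ τ hτ))
    (fun τ hτ ↦ le_add_of_nonneg_right (mul_nonneg (hg τ (hnonneg τ hτ)) (sq_nonneg _)))
    (fun τ hτ ↦ by linarith [hgξ τ hτ])
    (fun τ _ ↦ (hv.differentiable two_ne_zero τ).hasDerivAt.hasDerivWithinAt)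
    (fun τ hτ ↦ (hasDerivAt_deriv_of_damped_equation hv (hode τ hτ)).hasDerivWithinAt) ht
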